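/- arXiv:2407.13955 — 11 statements merged into one kernel-verified Lean document; each statement's English description precedes it below -/
import Mathlib

section
/- Let σ : ℰ → ℂ and q : ℐ → ℂ. If the matrix (L_σ)_ℐℐ + diag(q) is invertible, then for every f : ℬ → ℂ there exists a unique u : 𝒱 → ℂ satisfying the discrete Schrödinger Dirichlet problem (L_σ u)_ℐ + q ⊙ u_ℐ = 0 and u_ℬ = f, and it is given by u_ℬ = f and u_ℐ = −((L_σ)_ℐℐ + diag(q))⁻¹ (L_σ)_ℐℬ f. -/
open Matrix

noncomputable section

variable {E B I : Type*} [Fintype E] [Fintype B] [Fintype I]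
  [DecidableEq E] [DecidableEq B] [DecidableEq I]

/-- Discrete gradient of an oriented graph whose edge `e` goes from node `tail e`
to node `head e`, so that `(dGrad R head tail *ᵥ u) e = u (head e) - u (tail e)`.
The node set is `𝒱 = B ⊕ I`, with boundary nodes `B` and interior nodes `I`. -/
def dGrad (R : Type*) [Ring R] (head tail : E → B ⊕ I) : Matrix E (B ⊕ I) R :=
  Matrix.of fun e v => (if v = head e then 1 else 0) - (if v = tail e then 1 else 0)

/-- The weighted graph Laplacian `L_w = ∇ᵀ diag(w) ∇`. -/
def dLap (R : Type*) [CommRing R] (head tail : E → B ⊕ I) (w : E → R) :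
    Matrix (B ⊕ I) (B ⊕ I) R :=
  (dGrad R head tail)ᵀ * Matrix.diagonal w * dGrad R head tail

/-- The restriction matrix `R_ℐ` from vectors on `𝒱 = B ⊕ I` to vectors on `I`;
its transpose extends by zero. -/
def RImat (R : Type*) [Ring R] : Matrix I (B ⊕ I) R :=
  Matrix.of fun i v => if v = Sum.inr i then 1 else 0

theorem aux_block (L : Matrix (B ⊕ I) (B ⊕ I) ℂ) (q : I → ℂ) (u : B ⊕ I → ℂ) :
    (L *ᵥ u) ∘ Sum.inr + (fun i => q i * u (Sum.inr i)) =
      (L.submatrix Sum.inr Sum.inr + Matrix.diagonal q) *ᵥ (u ∘ Sum.inr) +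
        L.submatrix Sum.inr Sum.inl *ᵥ (u ∘ Sum.inl) := by
  funext i
  rw [Matrix.add_mulVec]
  simp only [Pi.add_apply, Function.comp_apply, Matrix.mulVec_diagonal]
  simp only [Matrix.mulVec, dotProduct, Fintype.sum_sum_type, Matrix.submatrix_apply,
    Function.comp_apply]
  ring

/-- for complex `σ : ℰ → ℂ`, `q : ℐ → ℂ`, if `(L_σ)_ℐℐ + diag(q)` is
invertible then for every `f : ℬ → ℂ` the Schrödinger Dirichlet problem
`(L_σ u)_ℐ + q ⊙ u_ℐ = 0`, `u_ℬ = f` has `u` as a solution iff `u_ℬ = f` and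
`u_ℐ = -((L_σ)_ℐℐ + diag(q))⁻¹ (L_σ)_ℐℬ f`; in particular a unique solution exists
and is given by this formula. -/
theorem schroedinger_dirichlet_unique_solution
    (head tail : E → B ⊕ I) (hloop : ∀ e, head e ≠ tail e) (σ : E → ℂ) (q : I → ℂ)
    (hinv : IsUnit ((dLap ℂ head tail σ).submatrix Sum.inr Sum.inr + Matrix.diagonal q)) :
    ∀ f : B → ℂ, ∀ u : B ⊕ I → ℂ,
      (((dLap ℂ head tail σ *ᵥ u) ∘ Sum.inr + (fun i => q i * u (Sum.inr i)) = 0 ∧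
          u ∘ Sum.inl = f) ↔
        u = Sum.elim f
          (-(((dLap ℂ head tail σ).submatrix Sum.inr Sum.inr + Matrix.diagonal q)⁻¹ *ᵥ
              ((dLap ℂ head tail σ).submatrix Sum.inr Sum.inl *ᵥ f)))) := by
  intro f u
  rw [aux_block]
  generalize (dLap ℂ head tail σ).submatrix Sum.inr Sum.inr + Matrix.diagonal q = A at hinv ⊢
  generalize (dLap ℂ head tail σ).submatrix Sum.inr Sum.inl = C
  have hdet : IsUnit A.det := (Matrix.isUnit_iff_isUnit_det A).mp hinv
  constructor
  · rintro ⟨h, rfl⟩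
    have h1 : u ∘ Sum.inr = -(A⁻¹ *ᵥ (C *ᵥ (u ∘ Sum.inl))) := by
      rw [← Matrix.mulVec_neg, ← eq_neg_of_add_eq_zero_left h, Matrix.mulVec_mulVec,
        Matrix.nonsing_inv_mul A hdet, Matrix.one_mulVec]
    rw [← h1, Sum.elim_comp_inl_inr]
  · rintro rfl
    refine ⟨?_, Sum.elim_comp_inl _ _⟩
    rw [Sum.elim_comp_inl, Sum.elim_comp_inr, Matrix.mulVec_neg, Matrix.mulVec_mulVec,
      Matrix.mul_nonsing_inv A hdet, Matrix.one_mulVec, neg_add_cancel]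
end
end

section
/- Let (Ω, μ) be a probability space and let J : Ω → (ℰ → ℝ) be a square-integrable random vector of edge currents with zero mean, ∫ J dμ = 0, and covariance ∫ J(e) J(e') dμ = (κ/π) δ_{e,e'} T(e) σ(e) for all e, e' ∈ ℰ, where T : ℰ → (0,∞) is a temperature function and κ > 0 is a constant. Assume (L_σ)_ℐℐ is invertible, and define the random boundary current g := (L_σ)_ℬℐ ((L_σ)_ℐℐ)⁻¹ R_ℐ ∇ᵀ J (which equals (L_σ u)_ℬ for the grounded solution u of the random current conservation problem). Then ∫ g dμ = 0 and ∫ g gᵀ dμ = (κ/π) (L_σ)_ℬℐ ((L_σ)_ℐℐ)⁻¹ R_ℐ ∇ᵀ diag(T ⊙ σ) ∇ R_ℐᵀ ((L_σ)_ℐℐ)⁻¹ (L_σ)_ℐℬ. -/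
open Matrix

noncomputable section

variable {E B I : Type*} [Fintype E] [Fintype B] [Fintype I]
  [DecidableEq E] [DecidableEq B] [DecidableEq I]

open MeasureTheory

theorem aux_mean_cov {E B Ω : Type*} [Fintype E] [DecidableEq E] [MeasurableSpace Ω]
    (μ : Measure Ω) [IsProbabilityMeasure μ] (J : Ω → E → ℝ)
    (hL2 : ∀ e, MemLp (fun ω => J ω e) 2 μ)
    (hmean : ∀ e, ∫ ω, J ω e ∂μ = 0) (c : ℝ) (d : E → ℝ)
    (hcov : ∀ e e', ∫ ω, J ω e * J ω e' ∂μ = c * ((if e = e' then 1 else 0) * d e))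
    (M : Matrix B E ℝ) :
    (∀ b, ∫ ω, (M *ᵥ J ω) b ∂μ = 0) ∧
    (∀ b b', ∫ ω, (M *ᵥ J ω) b * (M *ᵥ J ω) b' ∂μ =
      (c • (M * Matrix.diagonal d * Mᵀ)) b b') := by
  constructor
  · intro b
    simp only [Matrix.mulVec, dotProduct]
    rw [integral_finsetSum]
    · simp [integral_const_mul, hmean]
    · intro e _
      exact ((hL2 e).integrable (by norm_num)).const_mul _
  · intro b b'
    have hint : ∀ e e', Integrable (fun ω => M b e * J ω e * (M b' e' * J ω e')) μ := by
      intro e e'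
      have h := ((hL2 e).integrable_mul (hL2 e')).const_mul (M b e * M b' e')
      refine h.congr (Filter.Eventually.of_forall fun ω => ?_)
      simp only [Pi.mul_apply]
      ring
    have hval : ∀ e e', ∫ ω, M b e * J ω e * (M b' e' * J ω e') ∂μ =
        M b e * M b' e' * (c * ((if e = e' then 1 else 0) * d e)) := by
      intro e e'
      rw [← hcov, ← integral_const_mul]
      congr 1
      ext ω
      ring
    simp only [Matrix.mulVec, dotProduct, Finset.sum_mul_sum]
    rw [integral_finsetSum _ fun e _ => integrable_finsetSum _ fun e' _ => hint e e']
    rw [Matrix.smul_apply, Matrix.mul_apply, smul_eq_mul, Finset.mul_sum]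
    refine Finset.sum_congr rfl fun e _ => ?_
    rw [integral_finsetSum _ fun e' _ => hint e e']
    simp only [hval, Matrix.mul_diagonal, Matrix.transpose_apply]
    simp
    ring

/-- mean and covariance of the thermal-noise induced boundary currents
`g = (L_σ)_ℬℐ ((L_σ)_ℐℐ)⁻¹ R_ℐ ∇ᵀ J` for zero-mean square-integrable random edge
currents `J` with covariance `(κ/π) δ_{e,e'} T(e) σ(e)`. -/
theorem boundary_current_mean_and_covariance
    (head tail : E → B ⊕ I) (hloop : ∀ e, head e ≠ tail e) (σ : E → ℝ)
    (T : E → ℝ) (hT : ∀ e, 0 < T e) (κ : ℝ) (hκ : 0 < κ)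
    {Ω : Type*} [MeasurableSpace Ω] (μ : Measure Ω) [IsProbabilityMeasure μ]
    (J : Ω → E → ℝ)
    (hL2 : ∀ e, MemLp (fun ω => J ω e) 2 μ)
    (hmean : ∀ e, ∫ ω, J ω e ∂μ = 0)
    (hcov : ∀ e e', ∫ ω, J ω e * J ω e' ∂μ =
      κ / Real.pi * ((if e = e' then 1 else 0) * T e * σ e))
    (hinv : IsUnit ((dLap ℝ head tail σ).submatrix Sum.inr Sum.inr))
    (g : Ω → B → ℝ)
    (hg : ∀ ω, g ω = (dLap ℝ head tail σ).submatrix Sum.inl Sum.inr *ᵥ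
      (((dLap ℝ head tail σ).submatrix Sum.inr Sum.inr)⁻¹ *ᵥ
        (RImat ℝ *ᵥ ((dGrad ℝ head tail)ᵀ *ᵥ J ω)))) :
    (∀ b, ∫ ω, g ω b ∂μ = 0) ∧
    (∀ b b', ∫ ω, g ω b * g ω b' ∂μ =
      ((κ / Real.pi) •
        ((dLap ℝ head tail σ).submatrix Sum.inl Sum.inr *
          ((dLap ℝ head tail σ).submatrix Sum.inr Sum.inr)⁻¹ *
          (RImat ℝ : Matrix I (B ⊕ I) ℝ) *
          (dGrad ℝ head tail)ᵀ * Matrix.diagonal (fun e => T e * σ e) *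
          dGrad ℝ head tail * (RImat ℝ : Matrix I (B ⊕ I) ℝ)ᵀ *
          ((dLap ℝ head tail σ).submatrix Sum.inr Sum.inr)⁻¹ *
          (dLap ℝ head tail σ).submatrix Sum.inr Sum.inl)) b b') := by
  have hsymm : (dLap ℝ head tail σ)ᵀ = dLap ℝ head tail σ := by
    simp [dLap, Matrix.transpose_mul, Matrix.mul_assoc]
  have h := aux_mean_cov μ J hL2 hmean (κ / Real.pi) (fun e => T e * σ e)
    (fun e e' => by rw [hcov, mul_assoc])
    ((dLap ℝ head tail σ).submatrix Sum.inl Sum.inr *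
      ((dLap ℝ head tail σ).submatrix Sum.inr Sum.inr)⁻¹ *
      (RImat ℝ : Matrix I (B ⊕ I) ℝ) * (dGrad ℝ head tail)ᵀ)
  have hg' : ∀ ω, g ω = ((dLap ℝ head tail σ).submatrix Sum.inl Sum.inr *
      ((dLap ℝ head tail σ).submatrix Sum.inr Sum.inr)⁻¹ *
      (RImat ℝ : Matrix I (B ⊕ I) ℝ) * (dGrad ℝ head tail)ᵀ) *ᵥ J ω := by
    intro ω
    rw [hg]
    simp only [Matrix.mulVec_mulVec, Matrix.mul_assoc]
  simp only [← hg'] at h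
  refine ⟨h.1, fun b b' => ?_⟩
  rw [h.2]
  simp only [Matrix.transpose_mul, Matrix.transpose_nonsing_inv, Matrix.transpose_submatrix,
    hsymm, Matrix.transpose_transpose, Matrix.mul_assoc]
end
end

section
/- Assume (L_σ)_ℐℐ is invertible. For a temperature function T : ℰ → ℝ define the boundary current covariance matrix C(T) := (κ/π) (L_σ)_ℬℐ ((L_σ)_ℐℐ)⁻¹ R_ℐ ∇ᵀ diag(T ⊙ σ) ∇ R_ℐᵀ ((L_σ)_ℐℐ)⁻¹ (L_σ)_ℐℬ. Let T₀ be a constant temperature, δT ∈ ℝ, e ∈ ℰ, and T_e := T₀ + δT·δ_e. Then C(T_e) − C(T₀) = (κ/π) δT σ(e) r_eᵀ r_e, where r_e := δ_eᵀ ∇ R_ℐᵀ ((L_σ)_ℐℐ)⁻¹ (L_σ)_ℐℬ is a row vector indexed by ℬ; in particular the difference is a rank-at-most-one symmetric matrix. -/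
open Matrix

noncomputable section

variable {E B I : Type*} [Fintype E] [Fintype B] [Fintype I]
  [DecidableEq E] [DecidableEq B] [DecidableEq I]

/-- differential covariance measurement. For the covariance matrix
`C(T) = (κ/π) (L_σ)_ℬℐ ((L_σ)_ℐℐ)⁻¹ R_ℐ ∇ᵀ diag(T ⊙ σ) ∇ R_ℐᵀ ((L_σ)_ℐℐ)⁻¹ (L_σ)_ℐℬ`
and `T_e = T₀ + δT·δ_e`, one has `C(T_e) - C(T₀) = (κ/π) δT σ(e) r_eᵀ r_e` where
`r_e = δ_eᵀ ∇ R_ℐᵀ ((L_σ)_ℐℐ)⁻¹ (L_σ)_ℐℬ`; in particular the difference is a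
rank-at-most-one symmetric matrix. -/
theorem differential_covariance_rank_one
    (head tail : E → B ⊕ I) (hloop : ∀ e, head e ≠ tail e) (σ : E → ℝ)
    (κ T₀ δT : ℝ) (hκ : 0 < κ)
    (hinv : IsUnit ((dLap ℝ head tail σ).submatrix Sum.inr Sum.inr))
    (C : (E → ℝ) → Matrix B B ℝ)
    (hC : ∀ T : E → ℝ, C T = (κ / Real.pi) •
      ((dLap ℝ head tail σ).submatrix Sum.inl Sum.inr *
        ((dLap ℝ head tail σ).submatrix Sum.inr Sum.inr)⁻¹ *
        (RImat ℝ : Matrix I (B ⊕ I) ℝ) *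
        (dGrad ℝ head tail)ᵀ * Matrix.diagonal (fun e => T e * σ e) *
        dGrad ℝ head tail * (RImat ℝ : Matrix I (B ⊕ I) ℝ)ᵀ *
        ((dLap ℝ head tail σ).submatrix Sum.inr Sum.inr)⁻¹ *
        (dLap ℝ head tail σ).submatrix Sum.inr Sum.inl))
    (e : E)
    (r : B → ℝ)
    (hr : r = fun b =>
      (dGrad ℝ head tail * (RImat ℝ : Matrix I (B ⊕ I) ℝ)ᵀ *
        ((dLap ℝ head tail σ).submatrix Sum.inr Sum.inr)⁻¹ *
        (dLap ℝ head tail σ).submatrix Sum.inr Sum.inl) e b) :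
    C (fun e' => T₀ + δT * (if e' = e then 1 else 0)) - C (fun _ => T₀) =
      (κ / Real.pi * δT * σ e) • Matrix.vecMulVec r r ∧
    (C (fun e' => T₀ + δT * (if e' = e then 1 else 0)) - C (fun _ => T₀)).IsSymm ∧
    (C (fun e' => T₀ + δT * (if e' = e then 1 else 0)) - C (fun _ => T₀)).rank ≤ 1 := by
  have hsym : (dLap ℝ head tail σ)ᵀ = dLap ℝ head tail σ := by
    simp [dLap, Matrix.mul_assoc]
  have hIB : ((dLap ℝ head tail σ).submatrix Sum.inr Sum.inl)ᵀ =
      (dLap ℝ head tail σ).submatrix (Sum.inl : B → B ⊕ I) Sum.inr := by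
    rw [Matrix.transpose_submatrix, hsym]
  have hII : (((dLap ℝ head tail σ).submatrix Sum.inr Sum.inr)⁻¹)ᵀ =
      ((dLap ℝ head tail σ).submatrix (Sum.inr : I → B ⊕ I) Sum.inr)⁻¹ := by
    rw [Matrix.transpose_nonsing_inv, Matrix.transpose_submatrix, hsym]
  obtain ⟨M, hM⟩ : ∃ M : Matrix E B ℝ, M = dGrad ℝ head tail *
      (RImat ℝ : Matrix I (B ⊕ I) ℝ)ᵀ *
        ((dLap ℝ head tail σ).submatrix Sum.inr Sum.inr)⁻¹ *
        (dLap ℝ head tail σ).submatrix Sum.inr Sum.inl := ⟨_, rfl⟩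
  have hC' : ∀ T : E → ℝ, C T = (κ / Real.pi) •
      (Mᵀ * Matrix.diagonal (fun e => T e * σ e) * M) := by
    intro T
    rw [hC, hM]
    simp only [Matrix.transpose_mul, hIB, hII, Matrix.transpose_transpose, Matrix.mul_assoc]
  rw [← hM] at hr
  have hent : ∀ (d : E → ℝ) (a b : B), (Mᵀ * Matrix.diagonal d * M) a b =
      ∑ j, M j a * d j * M j b := by
    intro d a b
    rw [Matrix.mul_apply]
    refine Finset.sum_congr rfl fun j _ => ?_
    rw [Matrix.mul_diagonal, Matrix.transpose_apply]
  have key : C (fun e' => T₀ + δT * (if e' = e then 1 else 0)) - C (fun _ => T₀) =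
      (κ / Real.pi * δT * σ e) • Matrix.vecMulVec r r := by
    ext a b
    rw [hC', hC', hr]
    simp only [Matrix.sub_apply, Matrix.smul_apply, hent, Matrix.vecMulVec_apply, smul_eq_mul]
    rw [← mul_sub, ← Finset.sum_sub_distrib, Finset.sum_eq_single e]
    · rw [if_pos rfl]
      ring
    · intro x _ hx
      simp [hx]
    · simp
  rw [key]
  refine ⟨rfl, ?_, ?_⟩
  · ext a b
    simp [Matrix.vecMulVec_apply, mul_comm]
  · rw [← Matrix.smul_vecMulVec]
    exact Matrix.rank_vecMulVec_le _ _
end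
end

section
/- Assume (L_σ)_ℐℐ is invertible, and let u : 𝒱 → ℝ solve the Dirichlet problem (∇ᵀ(σ ⊙ ∇u))_ℐ = 0, u_ℬ = f. For a temperature T : ℰ → ℝ define C(T) := (κ/π) (L_σ)_ℬℐ ((L_σ)_ℐℐ)⁻¹ R_ℐ ∇ᵀ diag(T ⊙ σ) ∇ R_ℐᵀ ((L_σ)_ℐℐ)⁻¹ (L_σ)_ℐℬ, let T₀ be a constant temperature, δT ∈ ℝ, and T_e := T₀ + δT·δ_e for each e ∈ ℰ. Then for every edge e ∈ ℰ: fᵀ (C(T_e) − C(T₀)) f = (κ/π) δT · (σ ⊙ |∇ R_ℐᵀ R_ℐ u|²)(e); i.e., the vector of differential quadratic-form measurements [fᵀ(C(T_e) − C(T₀))f]_{e∈ℰ} equals (κ/π) δT σ ⊙ |∇ R_ℐᵀ R_ℐ u|². -/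
open Matrix

noncomputable section

variable {E B I : Type*} [Fintype E] [Fintype B] [Fintype I]
  [DecidableEq E] [DecidableEq B] [DecidableEq I]

theorem aux_dLap_symm (head tail : E → B ⊕ I) (σ : E → ℝ) :
    (dLap ℝ head tail σ)ᵀ = dLap ℝ head tail σ := by
  simp [dLap, Matrix.transpose_mul, Matrix.mul_assoc]

theorem aux_RI (u : B ⊕ I → ℝ) : (RImat ℝ : Matrix I (B ⊕ I) ℝ) *ᵥ u = u ∘ Sum.inr := by
  ext i
  simp [RImat, Matrix.mulVec, dotProduct]

theorem aux_quad (P : Matrix E B ℝ) (d : E → ℝ) (f : B → ℝ) :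
    f ⬝ᵥ ((Pᵀ * Matrix.diagonal d * P) *ᵥ f) = ∑ e, d e * ((P *ᵥ f) e) ^ 2 := by
  rw [← Matrix.mulVec_mulVec, ← Matrix.mulVec_mulVec, Matrix.dotProduct_mulVec,
    Matrix.vecMul_transpose]
  simp only [dotProduct, Matrix.mulVec_diagonal]
  exact Finset.sum_congr rfl fun e _ => by ring

/-- differential thermal-noise measurements give the dissipated power:
for `u` solving the Dirichlet problem with boundary voltage `f`, and every edge `e`,
`fᵀ (C(T_e) − C(T₀)) f = (κ/π) δT (σ ⊙ |∇ R_ℐᵀ R_ℐ u|²)(e)`. -/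
theorem differential_covariance_gives_power
    (head tail : E → B ⊕ I) (hloop : ∀ e, head e ≠ tail e) (σ : E → ℝ)
    (κ T₀ δT : ℝ) (hκ : 0 < κ)
    (hinv : IsUnit ((dLap ℝ head tail σ).submatrix Sum.inr Sum.inr))
    (f : B → ℝ) (u : B ⊕ I → ℝ)
    (hcons : (((dGrad ℝ head tail)ᵀ *ᵥ fun e => σ e * (dGrad ℝ head tail *ᵥ u) e) ∘ Sum.inr = 0))
    (hbd : u ∘ Sum.inl = f)
    (C : (E → ℝ) → Matrix B B ℝ)
    (hC : ∀ T : E → ℝ, C T = (κ / Real.pi) •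
      ((dLap ℝ head tail σ).submatrix Sum.inl Sum.inr *
        ((dLap ℝ head tail σ).submatrix Sum.inr Sum.inr)⁻¹ *
        (RImat ℝ : Matrix I (B ⊕ I) ℝ) *
        (dGrad ℝ head tail)ᵀ * Matrix.diagonal (fun e => T e * σ e) *
        dGrad ℝ head tail * (RImat ℝ : Matrix I (B ⊕ I) ℝ)ᵀ *
        ((dLap ℝ head tail σ).submatrix Sum.inr Sum.inr)⁻¹ *
        (dLap ℝ head tail σ).submatrix Sum.inr Sum.inl)) :
    ∀ e : E,
      f ⬝ᵥ ((C (fun e' => T₀ + δT * (if e' = e then 1 else 0)) - C (fun _ => T₀)) *ᵥ f) =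
        κ / Real.pi * δT *
          (σ e *
            ((dGrad ℝ head tail *ᵥ ((RImat ℝ : Matrix I (B ⊕ I) ℝ)ᵀ *ᵥ
              (RImat ℝ *ᵥ u))) e) ^ 2) := by
  intro e
  set L := dLap ℝ head tail σ with hL
  set G := dGrad ℝ head tail with hG
  set A := L.submatrix (Sum.inr : I → B ⊕ I) Sum.inr with hA
  have hLs : Lᵀ = L := aux_dLap_symm head tail σ
  have hAs : Aᵀ = A := by rw [hA, Matrix.transpose_submatrix, hLs]
  have hLB : (L.submatrix (Sum.inr : I → B ⊕ I) (Sum.inl : B → B ⊕ I))ᵀ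
      = L.submatrix Sum.inl Sum.inr := by rw [Matrix.transpose_submatrix, hLs]
  have hdet : IsUnit A.det := (Matrix.isUnit_iff_isUnit_det A).1 hinv
  have hLu : L *ᵥ u = Gᵀ *ᵥ fun e => σ e * (G *ᵥ u) e := by
    rw [hL, dLap, ← Matrix.mulVec_mulVec, ← Matrix.mulVec_mulVec]
    congr 1
    ext e
    simp [Matrix.mulVec_diagonal, hG]
  have hsplit : L.submatrix Sum.inr Sum.inl *ᵥ f + A *ᵥ (u ∘ Sum.inr) = 0 := by
    rw [← hLu] at hcons
    rw [← hcons, ← hbd]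
    ext i
    simp [Matrix.mulVec, dotProduct, hA, Fintype.sum_sum_type]
  have hw : A⁻¹ *ᵥ (L.submatrix Sum.inr Sum.inl *ᵥ f) = -(u ∘ Sum.inr) := by
    rw [eq_neg_of_add_eq_zero_left hsplit, Matrix.mulVec_neg, Matrix.mulVec_mulVec,
      Matrix.nonsing_inv_mul A hdet, Matrix.one_mulVec]
  set P : Matrix E B ℝ := G * (RImat ℝ : Matrix I (B ⊕ I) ℝ)ᵀ * A⁻¹ *
    L.submatrix Sum.inr Sum.inl with hP
  have hCP : ∀ T : E → ℝ, C T = (κ / Real.pi) •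
      (Pᵀ * Matrix.diagonal (fun e => T e * σ e) * P) := by
    intro T
    rw [hC T, hP]
    simp only [Matrix.transpose_mul, Matrix.transpose_transpose, hLB,
      Matrix.transpose_nonsing_inv, hAs, Matrix.mul_assoc]
  have hPf : P *ᵥ f = -(G *ᵥ ((RImat ℝ : Matrix I (B ⊕ I) ℝ)ᵀ *ᵥ (RImat ℝ *ᵥ u))) := by
    rw [hP, ← Matrix.mulVec_mulVec, ← Matrix.mulVec_mulVec, hw, ← Matrix.mulVec_mulVec,
      Matrix.mulVec_neg, Matrix.mulVec_neg, aux_RI]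
  rw [hCP, hCP, Matrix.sub_mulVec, dotProduct_sub, Matrix.smul_mulVec, Matrix.smul_mulVec,
    dotProduct_smul, dotProduct_smul, aux_quad, aux_quad, hPf, smul_eq_mul, smul_eq_mul,
    ← mul_sub, ← Finset.sum_sub_distrib, mul_assoc]
  congr 1
  rw [Finset.sum_eq_single e]
  · simp only [Pi.neg_apply, if_true]
    ring
  · intro b _ hb
    simp [hb]
  · simp
end
end

section
/- Let σ : ℰ → (0,∞) and let u⁽ʲ⁾ : 𝒱 → ℝ, j = 1,…,N, be given. Define the sign functions s⁽ʲ⁾ : ℰ → {−1,1} by s⁽ʲ⁾ = 1 − 2·1_{supp ∇u⁽ʲ⁾}. Assume: (i) ⋃_{j=1}^N supp ∇u⁽ʲ⁾ = ℰ; (ii) (L_σ)_ℐℐ is invertible; (iii) (L_{s⁽ʲ⁾⊙σ})_ℐℐ is invertible for j = 1,…,N. Then the linearized inverse conductivity problem from power measurements is injective: if δσ : ℰ → ℝ and δu⁽ʲ⁾ : 𝒱 → ℝ satisfy, for all j = 1,…,N, the equations |∇u⁽ʲ⁾|² ⊙ δσ + 2σ ⊙ (∇u⁽ʲ⁾) ⊙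 (∇δu⁽ʲ⁾) = 0, (δu⁽ʲ⁾)_ℬ = 0, and (∇ᵀ((∇u⁽ʲ⁾) ⊙ δσ))_ℐ + (L_σ δu⁽ʲ⁾)_ℐ = 0, then δσ = 0 and δu⁽ʲ⁾ = 0 for all j. -/
open Matrix

noncomputable section

variable {E B I : Type*} [Fintype E] [Fintype B] [Fintype I]
  [DecidableEq E] [DecidableEq B] [DecidableEq I]

/-- local uniqueness for the discrete inverse conductivity problem from
power measurements: under the cover condition and invertibility of `(L_σ)_ℐℐ` and of
the `(L_{s⁽ʲ⁾⊙σ})_ℐℐ`, the linearized problem is injective. -/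
theorem real_conductivity_linearization_injective
    (head tail : E → B ⊕ I) (hloop : ∀ e, head e ≠ tail e)
    (σ : E → ℝ) (hσ : ∀ e, 0 < σ e)
    (N : ℕ) (u : Fin N → B ⊕ I → ℝ)
    (s : Fin N → E → ℝ)
    (hs : ∀ j e, s j e = 1 - 2 * (if (dGrad ℝ head tail *ᵥ u j) e ≠ 0 then 1 else 0))
    (hcover : ∀ e : E, ∃ j, (dGrad ℝ head tail *ᵥ u j) e ≠ 0)
    (hinv : IsUnit ((dLap ℝ head tail σ).submatrix Sum.inr Sum.inr))
    (hinvs : ∀ j, IsUnit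
      ((dLap ℝ head tail (fun e => s j e * σ e)).submatrix Sum.inr Sum.inr))
    (δσ : E → ℝ) (δu : Fin N → B ⊕ I → ℝ)
    (h1 : ∀ j e, ((dGrad ℝ head tail *ᵥ u j) e) ^ 2 * δσ e +
      2 * σ e * (dGrad ℝ head tail *ᵥ u j) e * (dGrad ℝ head tail *ᵥ δu j) e = 0)
    (h2 : ∀ j, δu j ∘ Sum.inl = 0)
    (h3 : ∀ j, (((dGrad ℝ head tail)ᵀ *ᵥ fun e => (dGrad ℝ head tail *ᵥ u j) e * δσ e) ∘
        Sum.inr) + (dLap ℝ head tail σ *ᵥ δu j) ∘ Sum.inr = 0) :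
    δσ = 0 ∧ ∀ j, δu j = 0 := by
  have key : ∀ j, δu j = 0 := by
    intro j
    have hL : (dLap ℝ head tail (fun e => s j e * σ e) *ᵥ δu j) ∘ Sum.inr = 0 := by
      rw [← h3 j]
      have hexp : ∀ w : E → ℝ, dLap ℝ head tail w *ᵥ δu j =
          (dGrad ℝ head tail)ᵀ *ᵥ fun e => w e * (dGrad ℝ head tail *ᵥ δu j) e := by
        intro w
        unfold dLap
        rw [← Matrix.mulVec_mulVec, ← Matrix.mulVec_mulVec]
        congr 1
        ext e
        rw [Matrix.mulVec_diagonal]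
      rw [hexp, hexp]
      have hfun : (fun e => s j e * σ e * (dGrad ℝ head tail *ᵥ δu j) e) =
          (fun e => (dGrad ℝ head tail *ᵥ u j) e * δσ e) +
          (fun e => σ e * (dGrad ℝ head tail *ᵥ δu j) e) := by
        ext e
        have h := h1 j e
        rw [Pi.add_apply, hs j e]
        by_cases hg : (dGrad ℝ head tail *ᵥ u j) e = 0
        · simp [hg]
        · have h' : (dGrad ℝ head tail *ᵥ u j) e * δσ e
              + 2 * σ e * (dGrad ℝ head tail *ᵥ δu j) e = 0 := by
            apply mul_left_cancel₀ hg
            linear_combination h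
          simp only [ne_eq, hg, not_false_eq_true, if_true]
          linear_combination -h'
      rw [hfun, Matrix.mulVec_add]
      rfl
    have hz : (dLap ℝ head tail (fun e => s j e * σ e)).submatrix Sum.inr Sum.inr *ᵥ
        (δu j ∘ Sum.inr) = 0 := by
      rw [← hL]
      ext i
      have hb : ∀ b, δu j (Sum.inl b) = 0 := fun b => congrFun (h2 j) b
      simp [Matrix.mulVec, dotProduct, Fintype.sum_sum_type, hb]
    have hI : δu j ∘ Sum.inr = 0 := by
      apply Matrix.mulVec_injective_of_isUnit (hinvs j)
      rw [hz, Matrix.mulVec_zero]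
    ext v
    rcases v with b | i
    · exact congrFun (h2 j) b
    · exact congrFun hI i
  refine ⟨?_, key⟩
  ext e
  obtain ⟨j, hj⟩ := hcover e
  have h := h1 j e
  rw [key j, Matrix.mulVec_zero] at h
  simpa [hj] using h
end
end

section
/- Let σ : ℰ → ℝ and u : 𝒱 → ℝ, and set s := 1 − 2·1_{supp ∇u}. Suppose δσ : ℰ → ℝ and δu : 𝒱 → ℝ satisfy |∇u|² ⊙ δσ + 2σ ⊙ (∇u) ⊙ (∇δu) = 0, (δu)_ℬ = 0, and (∇ᵀ((∇u) ⊙ δσ))_ℐ + (L_σ δu)_ℐ = 0. Then: (a) δσ ⊙ 1_{supp ∇u} = −2 (∇u)† ⊙ σ ⊙ (∇ R_ℐᵀ δu_ℐ), and (b) (L_{s⊙σ})_ℐℐ δu_ℐ = 0. -/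
open Matrix

noncomputable section

variable {E B I : Type*} [Fintype E] [Fintype B] [Fintype I]
  [DecidableEq E] [DecidableEq B] [DecidableEq I]

/-- key identities in the proof of local uniqueness for the real
conductivity problem: (a) `δσ ⊙ 1_{supp ∇u} = -2 (∇u)† ⊙ σ ⊙ (∇ R_ℐᵀ δu_ℐ)` and
(b) `(L_{s⊙σ})_ℐℐ δu_ℐ = 0`, where `s = 1 - 2·1_{supp ∇u}`. -/
theorem real_conductivity_linearization_identities
    (head tail : E → B ⊕ I) (hloop : ∀ e, head e ≠ tail e)
    (σ : E → ℝ) (u : B ⊕ I → ℝ)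
    (s : E → ℝ)
    (hs : ∀ e, s e = 1 - 2 * (if (dGrad ℝ head tail *ᵥ u) e ≠ 0 then 1 else 0))
    (δσ : E → ℝ) (δu : B ⊕ I → ℝ)
    (h1 : ∀ e, ((dGrad ℝ head tail *ᵥ u) e) ^ 2 * δσ e +
      2 * σ e * (dGrad ℝ head tail *ᵥ u) e * (dGrad ℝ head tail *ᵥ δu) e = 0)
    (h2 : δu ∘ Sum.inl = 0)
    (h3 : (((dGrad ℝ head tail)ᵀ *ᵥ fun e => (dGrad ℝ head tail *ᵥ u) e * δσ e) ∘
        Sum.inr) + (dLap ℝ head tail σ *ᵥ δu) ∘ Sum.inr = 0) :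
    (∀ e, δσ e * (if (dGrad ℝ head tail *ᵥ u) e ≠ 0 then 1 else 0) =
      -2 * (if (dGrad ℝ head tail *ᵥ u) e ≠ 0 then ((dGrad ℝ head tail *ᵥ u) e)⁻¹ else 0) *
        σ e *
        (dGrad ℝ head tail *ᵥ ((RImat ℝ : Matrix I (B ⊕ I) ℝ)ᵀ *ᵥ (δu ∘ Sum.inr))) e) ∧
    (dLap ℝ head tail (fun e => s e * σ e)).submatrix Sum.inr Sum.inr *ᵥ (δu ∘ Sum.inr)
      = 0 := by
  have hx : (RImat ℝ : Matrix I (B ⊕ I) ℝ)ᵀ *ᵥ (δu ∘ Sum.inr) = δu := by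
    funext v
    rcases v with b | i
    · have := congrFun h2 b
      simp only [Function.comp_apply, Pi.zero_apply] at this
      simp [RImat, Matrix.mulVec, dotProduct, this]
    · simp [RImat, Matrix.mulVec, dotProduct]
  refine ⟨fun e => ?_, ?_⟩
  · rw [hx]
    have h := h1 e
    by_cases hg : (dGrad ℝ head tail *ᵥ u) e = 0
    · simp [hg]
    · simp only [ne_eq, hg, not_false_eq_true, if_true]
      field_simp
      apply mul_left_cancel₀ hg
      linarith
  · have key : ∀ w : E → ℝ, dLap ℝ head tail w *ᵥ δu =
        (dGrad ℝ head tail)ᵀ *ᵥ fun e => w e * (dGrad ℝ head tail *ᵥ δu) e := by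
      intro w
      unfold dLap
      rw [← Matrix.mulVec_mulVec, ← Matrix.mulVec_mulVec]
      congr 1
      funext e
      rw [Matrix.mulVec_diagonal]
    have hsub : (dLap ℝ head tail (fun e => s e * σ e)).submatrix Sum.inr Sum.inr *ᵥ
        (δu ∘ Sum.inr) = (dLap ℝ head tail (fun e => s e * σ e) *ᵥ δu) ∘ Sum.inr := by
      funext i
      have h2' : ∀ b, δu (Sum.inl b) = 0 := fun b => congrFun h2 b
      simp [Matrix.mulVec, dotProduct, Fintype.sum_sum_type, h2']
    rw [hsub, ← h3, key, key]
    have hv : (fun e => s e * σ e * (dGrad ℝ head tail *ᵥ δu) e) =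
        (fun e => (dGrad ℝ head tail *ᵥ u) e * δσ e) +
          fun e => σ e * (dGrad ℝ head tail *ᵥ δu) e := by
      funext e
      have h := h1 e
      rw [Pi.add_apply, hs]
      by_cases hg : (dGrad ℝ head tail *ᵥ u) e = 0
      · simp [hg]
      · simp only [ne_eq, hg, not_false_eq_true, if_true]
        apply mul_left_cancel₀ hg
        linarith
    rw [hv, Matrix.mulVec_add]
    rfl
end
end

section
/- Let σ' : ℰ → (0,∞), σ'' : ℰ → ℝ, ω₁ ∈ ℝ with ω₁ ≠ 0, σ := σ' + iω₁σ'', and suppose (L_σ)_ℐℐ is invertible. Let u₁ : 𝒱 → ℂ satisfy (∇ᵀ(σ ⊙ ∇u₁))_ℐ = 0. Suppose δσ'' : ℰ → ℝ and δu₁ : 𝒱 → ℂ satisfy (δu₁)_ℬ = 0 and (∇ᵀ((∇u₁) ⊙ (iω₁δσ'')))_ℐ + (L_σ δu₁)_ℐ = 0. Then: (a) δu₁ = −iω₁ R_ℐᵀ ((L_σ)_ℐℐ)⁻¹ R_ℐ ∇ᵀ diag(∇u₁) δσ''; and (b) if in addition σ' ⊙ conj(∇u₁) ⊙ ∇δu₁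 + σ' ⊙ (∇u₁) ⊙ conj(∇δu₁) = 0, then Re(A) δσ'' = 0, where A := −i diag(conj(∇u₁)) ∇ R_ℐᵀ ((L_σ)_ℐℐ)⁻¹ R_ℐ ∇ᵀ diag(∇u₁). -/
open Matrix

noncomputable section

variable {E B I : Type*} [Fintype E] [Fintype B] [Fintype I]
  [DecidableEq E] [DecidableEq B] [DecidableEq I]

theorem RImat_mulVec_aux (v : B ⊕ I → ℂ) :
    (RImat ℂ : Matrix I (B ⊕ I) ℂ) *ᵥ v = v ∘ Sum.inr := by
  ext i
  simp [RImat, Matrix.mulVec, dotProduct]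

theorem RImat_transpose_aux (v : B ⊕ I → ℂ) (h : v ∘ Sum.inl = 0) :
    (RImat ℂ : Matrix I (B ⊕ I) ℂ)ᵀ *ᵥ (v ∘ Sum.inr) = v := by
  ext j
  rcases j with b | i
  · have := congrFun h b
    simp at this
    simp [RImat, Matrix.mulVec, dotProduct, this]
  · simp [RImat, Matrix.mulVec, dotProduct]

theorem submatrix_aux (L : Matrix (B ⊕ I) (B ⊕ I) ℂ) (v : B ⊕ I → ℂ)
    (h : v ∘ Sum.inl = 0) :
    (L *ᵥ v) ∘ Sum.inr = L.submatrix Sum.inr Sum.inr *ᵥ (v ∘ Sum.inr) := by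
  ext i
  have h' : ∀ b, v (Sum.inl b) = 0 := fun b => congrFun h b
  simp [Matrix.mulVec, dotProduct, h']

/-- key identities in the proof of local uniqueness for the complex
conductivity problem: (a) the formula for `δu₁` in terms of `δσ''` and (b) the
equation `Re(A) δσ'' = 0`. -/
theorem complex_conductivity_linearization_identities
    (head tail : E → B ⊕ I) (hloop : ∀ e, head e ≠ tail e)
    (σ' : E → ℝ) (hσ' : ∀ e, 0 < σ' e) (σ'' : E → ℝ) (ω₁ : ℝ) (hω₁ : ω₁ ≠ 0)
    (σc : E → ℂ) (hσc : σc = fun e => (σ' e : ℂ) + (ω₁ : ℂ) * (σ'' e : ℂ) * Complex.I)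
    (hinv : IsUnit ((dLap ℂ head tail σc).submatrix Sum.inr Sum.inr))
    (u₁ : B ⊕ I → ℂ)
    (hu₁ : (((dGrad ℂ head tail)ᵀ *ᵥ fun e => σc e * (dGrad ℂ head tail *ᵥ u₁) e) ∘
      Sum.inr) = 0)
    (δσ'' : E → ℝ) (δu₁ : B ⊕ I → ℂ)
    (hbd : δu₁ ∘ Sum.inl = 0)
    (hlin : (((dGrad ℂ head tail)ᵀ *ᵥ fun e =>
        (dGrad ℂ head tail *ᵥ u₁) e * ((ω₁ : ℂ) * (δσ'' e : ℂ) * Complex.I)) ∘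
        Sum.inr) + (dLap ℂ head tail σc *ᵥ δu₁) ∘ Sum.inr = 0)
    (A : Matrix E E ℂ)
    (hA : A = (-Complex.I) •
      (Matrix.diagonal (fun e => starRingEnd ℂ ((dGrad ℂ head tail *ᵥ u₁) e)) *
        dGrad ℂ head tail * (RImat ℂ : Matrix I (B ⊕ I) ℂ)ᵀ *
        ((dLap ℂ head tail σc).submatrix Sum.inr Sum.inr)⁻¹ *
        (RImat ℂ : Matrix I (B ⊕ I) ℂ) * (dGrad ℂ head tail)ᵀ *
        Matrix.diagonal (fun e => (dGrad ℂ head tail *ᵥ u₁) e))) :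
    δu₁ = ((-Complex.I * (ω₁ : ℂ)) •
        ((RImat ℂ : Matrix I (B ⊕ I) ℂ)ᵀ *
          ((dLap ℂ head tail σc).submatrix Sum.inr Sum.inr)⁻¹ *
          (RImat ℂ : Matrix I (B ⊕ I) ℂ) * (dGrad ℂ head tail)ᵀ *
          Matrix.diagonal (fun e => (dGrad ℂ head tail *ᵥ u₁) e))) *ᵥ
        (fun e => (δσ'' e : ℂ)) ∧
    ((∀ e, σ' e * (starRingEnd ℂ ((dGrad ℂ head tail *ᵥ u₁) e)) *
        (dGrad ℂ head tail *ᵥ δu₁) e +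
      σ' e * (dGrad ℂ head tail *ᵥ u₁) e *
        starRingEnd ℂ ((dGrad ℂ head tail *ᵥ δu₁) e) = 0) →
      (Matrix.of fun e e' => (A e e').re) *ᵥ δσ'' = 0) := by
  have ha : δu₁ = ((-Complex.I * (ω₁ : ℂ)) •
        ((RImat ℂ : Matrix I (B ⊕ I) ℂ)ᵀ *
          ((dLap ℂ head tail σc).submatrix Sum.inr Sum.inr)⁻¹ *
          (RImat ℂ : Matrix I (B ⊕ I) ℂ) * (dGrad ℂ head tail)ᵀ *
          Matrix.diagonal (fun e => (dGrad ℂ head tail *ᵥ u₁) e))) *ᵥ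
        (fun e => (δσ'' e : ℂ)) := by
    rw [submatrix_aux _ _ hbd] at hlin
    have hg : (fun e => (dGrad ℂ head tail *ᵥ u₁) e *
        ((ω₁ : ℂ) * (δσ'' e : ℂ) * Complex.I)) = (Complex.I * (ω₁ : ℂ)) •
        (Matrix.diagonal (fun e => (dGrad ℂ head tail *ᵥ u₁) e) *ᵥ
          (fun e => (δσ'' e : ℂ))) := by
      ext e
      simp only [Matrix.mulVec_diagonal, Pi.smul_apply, smul_eq_mul]
      ring
    rw [hg, ← RImat_mulVec_aux] at hlin
    generalize (dLap ℂ head tail σc).submatrix Sum.inr Sum.inr = M at *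
    have hdet : IsUnit M.det := (Matrix.isUnit_iff_isUnit_det M).1 hinv
    have h2 := congrArg (fun w => M⁻¹ *ᵥ w) (eq_neg_of_add_eq_zero_right hlin)
    simp only [Matrix.mulVec_mulVec, Matrix.nonsing_inv_mul M hdet, Matrix.one_mulVec] at h2
    conv_lhs => rw [← RImat_transpose_aux δu₁ hbd, h2]
    simp only [Matrix.mulVec_neg, Matrix.mulVec_smul, Matrix.smul_mulVec,
      Matrix.mulVec_mulVec, Matrix.mul_assoc, neg_mul, neg_smul, Matrix.neg_mulVec]
  refine ⟨ha, fun h => ?_⟩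
  have hAv : ∀ e, (ω₁ : ℂ) * (A *ᵥ (fun e => (δσ'' e : ℂ))) e =
      starRingEnd ℂ ((dGrad ℂ head tail *ᵥ u₁) e) * (dGrad ℂ head tail *ᵥ δu₁) e := by
    intro e
    rw [← Matrix.mulVec_diagonal (fun e => starRingEnd ℂ ((dGrad ℂ head tail *ᵥ u₁) e))
      (dGrad ℂ head tail *ᵥ δu₁) e]
    conv_rhs => rw [ha]
    rw [hA, ← smul_eq_mul, ← Pi.smul_apply]
    congr 1
    simp only [Matrix.mulVec_smul, Matrix.smul_mulVec,
      Matrix.mulVec_mulVec, Matrix.mul_assoc, smul_smul, mul_comm]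
  ext e
  have h1 := congrArg Complex.re (h e)
  have h2 := congrArg Complex.re (hAv e)
  have h3 : ((A *ᵥ (fun e => (δσ'' e : ℂ))) e).re =
      ((Matrix.of fun e e' => (A e e').re) *ᵥ δσ'') e := by
    simp [Matrix.mulVec, dotProduct]
  rw [Complex.re_ofReal_mul, h3] at h2
  simp only [Complex.add_re, Complex.mul_re, Complex.mul_im, Complex.conj_re, Complex.conj_im,
    Complex.ofReal_re, Complex.ofReal_im, Complex.zero_re] at h1 h2
  have h4 : (2 * σ' e * ω₁) * ((Matrix.of fun e e' => (A e e').re) *ᵥ δσ'') e = 0 := by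
    linear_combination h1 + 2 * σ' e * h2
  have h5 : 2 * σ' e * ω₁ ≠ 0 := mul_ne_zero (mul_ne_zero two_ne_zero (hσ' e).ne') hω₁
  exact (mul_eq_zero.1 h4).resolve_left h5
end
end

section
/- Let σ : ℰ → (0,∞) and q : ℐ → ℝ, and let u⁽ʲ⁾ : 𝒱 → ℝ, j = 1,…,N, be given. Define the sign functions s⁽ʲ⁾ : ℐ → {−1,1} by s⁽ʲ⁾ = 1 − 2·1_{supp u⁽ʲ⁾_ℐ}. Assume: (i) ⋃_{j=1}^N supp u⁽ʲ⁾_ℐ = ℐ; (ii) (L_σ)_ℐℐ + diag(q) is invertible; (iii) (L_σ)_ℐℐ + diag(s⁽ʲ⁾ ⊙ q) is invertible for j = 1,…,N. Then the linearized inverse Schrödinger problem from dissipated power measurements is injective: if δq : ℐ → ℝ and δu⁽ʲ⁾ : 𝒱 → ℝ satisfy, for all j = 1,…,N, (L_σ δu⁽ʲ⁾)_ℐ + δq ⊙ u⁽ʲ⁾_ℐ + q ⊙ δu⁽ʲ⁾_ℐ = 0, (δu⁽ʲ⁾)_ℬ = 0, and δq ⊙ |u⁽ʲ⁾_ℐ|²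 + 2q ⊙ δu⁽ʲ⁾_ℐ ⊙ u⁽ʲ⁾_ℐ = 0, then δq = 0 and δu⁽ʲ⁾ = 0 for all j. -/
open Matrix

noncomputable section

variable {E B I : Type*} [Fintype E] [Fintype B] [Fintype I]
  [DecidableEq E] [DecidableEq B] [DecidableEq I]

/-- local uniqueness for the discrete inverse Schrödinger problem from
dissipated power measurements, real Schrödinger potential case. -/
theorem real_schroedinger_linearization_injective
    (head tail : E → B ⊕ I) (hloop : ∀ e, head e ≠ tail e)
    (σ : E → ℝ) (hσ : ∀ e, 0 < σ e) (q : I → ℝ)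
    (N : ℕ) (u : Fin N → B ⊕ I → ℝ)
    (s : Fin N → I → ℝ)
    (hs : ∀ j i, s j i = 1 - 2 * (if u j (Sum.inr i) ≠ 0 then 1 else 0))
    (hcover : ∀ i : I, ∃ j, u j (Sum.inr i) ≠ 0)
    (hinv : IsUnit ((dLap ℝ head tail σ).submatrix Sum.inr Sum.inr + Matrix.diagonal q))
    (hinvs : ∀ j, IsUnit ((dLap ℝ head tail σ).submatrix Sum.inr Sum.inr +
      Matrix.diagonal (fun i => s j i * q i)))
    (δq : I → ℝ) (δu : Fin N → B ⊕ I → ℝ)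
    (h1 : ∀ j, ((dLap ℝ head tail σ *ᵥ δu j) ∘ Sum.inr) +
      (fun i => δq i * u j (Sum.inr i)) + (fun i => q i * δu j (Sum.inr i)) = 0)
    (h2 : ∀ j, δu j ∘ Sum.inl = 0)
    (h3 : ∀ j i, δq i * (u j (Sum.inr i)) ^ 2 +
      2 * q i * δu j (Sum.inr i) * u j (Sum.inr i) = 0) :
    δq = 0 ∧ ∀ j, δu j = 0 := by
  have hu : ∀ j, δu j = 0 := by
    intro j
    have hB : ∀ b, δu j (Sum.inl b) = 0 := fun b => congrFun (h2 j) b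
    have key : ((dLap ℝ head tail σ).submatrix Sum.inr Sum.inr +
        Matrix.diagonal (fun i => s j i * q i)) *ᵥ (δu j ∘ Sum.inr) = 0 := by
      funext i
      have e1 := congrFun (h1 j) i
      have e3 := h3 j i
      have e4 := hs j i
      simp only [Pi.add_apply, Function.comp_apply, Pi.zero_apply, Matrix.mulVec, dotProduct,
        Fintype.sum_sum_type, hB, mul_zero, Finset.sum_const_zero, zero_add] at e1
      rw [Matrix.add_mulVec, Pi.add_apply, Matrix.mulVec_diagonal]
      simp only [Matrix.mulVec, dotProduct, Matrix.submatrix_apply, Function.comp_apply,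
        Pi.zero_apply]
      by_cases hz : u j (Sum.inr i) = 0
      · simp [hz] at e4 e1
        rw [e4]; linarith
      · simp [hz] at e4
        have : δq i * u j (Sum.inr i) + 2 * q i * δu j (Sum.inr i) = 0 := by
          apply mul_right_cancel₀ hz
          linarith
        rw [e4]; linarith
    have hz : δu j ∘ Sum.inr = 0 :=
      Matrix.mulVec_injective_of_isUnit (hinvs j) (by rw [key, Matrix.mulVec_zero])
    funext v
    rcases v with b | i
    · exact hB b
    · exact congrFun hz i
  refine ⟨?_, hu⟩
  funext i
  obtain ⟨j, hj⟩ := hcover i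
  have e3 := h3 j i
  simpa [hu j, hj] using e3
end
end

section
/- Let σ : ℰ → ℝ, q : ℐ → ℝ, and u : 𝒱 → ℝ, and set s := 1 − 2·1_{supp u_ℐ}. Suppose δq : ℐ → ℝ and δu : 𝒱 → ℝ satisfy (L_σ δu)_ℐ + δq ⊙ u_ℐ + q ⊙ δu_ℐ = 0, (δu)_ℬ = 0, and δq ⊙ |u_ℐ|² + 2q ⊙ δu_ℐ ⊙ u_ℐ = 0. Then: (a) δq ⊙ 1_{supp u_ℐ} = −2 (u_ℐ)† ⊙ q ⊙ δu_ℐ, and (b) ((L_σ)_ℐℐ + diag(s ⊙ q)) δu_ℐ = 0. -/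
open Matrix

noncomputable section

variable {E B I : Type*} [Fintype E] [Fintype B] [Fintype I]
  [DecidableEq E] [DecidableEq B] [DecidableEq I]

/-- key identities in the proof of local uniqueness for the real
Schrödinger problem: (a) `δq ⊙ 1_{supp u_ℐ} = -2 (u_ℐ)† ⊙ q ⊙ δu_ℐ` and
(b) `((L_σ)_ℐℐ + diag(s ⊙ q)) δu_ℐ = 0`, where `s = 1 - 2·1_{supp u_ℐ}`. -/
theorem real_schroedinger_linearization_identities
    (head tail : E → B ⊕ I) (hloop : ∀ e, head e ≠ tail e)
    (σ : E → ℝ) (q : I → ℝ) (u : B ⊕ I → ℝ)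
    (s : I → ℝ)
    (hs : ∀ i, s i = 1 - 2 * (if u (Sum.inr i) ≠ 0 then 1 else 0))
    (δq : I → ℝ) (δu : B ⊕ I → ℝ)
    (h1 : ((dLap ℝ head tail σ *ᵥ δu) ∘ Sum.inr) +
      (fun i => δq i * u (Sum.inr i)) + (fun i => q i * δu (Sum.inr i)) = 0)
    (h2 : δu ∘ Sum.inl = 0)
    (h3 : ∀ i, δq i * (u (Sum.inr i)) ^ 2 +
      2 * q i * δu (Sum.inr i) * u (Sum.inr i) = 0) :
    (∀ i, δq i * (if u (Sum.inr i) ≠ 0 then 1 else 0) =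
      -2 * (if u (Sum.inr i) ≠ 0 then (u (Sum.inr i))⁻¹ else 0) * q i * δu (Sum.inr i)) ∧
    ((dLap ℝ head tail σ).submatrix Sum.inr Sum.inr +
        Matrix.diagonal (fun i => s i * q i)) *ᵥ (δu ∘ Sum.inr) = 0 := by
  have key : ∀ i, u (Sum.inr i) ≠ 0 →
      δq i * u (Sum.inr i) = -2 * q i * δu (Sum.inr i) := by
    intro i hi
    apply mul_right_cancel₀ hi
    linarith [h3 i]
  refine ⟨?_, ?_⟩
  · intro i
    by_cases hi : u (Sum.inr i) = 0
    · simp [hi]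
    · have hk := key i hi
      simp only [ne_eq, hi, not_false_eq_true, if_true, mul_one]
      field_simp
      linarith
  · funext i
    have h := congrFun h1 i
    have hb : ∀ b, δu (Sum.inl b) = 0 := fun b => congrFun h2 b
    rw [Matrix.add_mulVec, Pi.add_apply, Matrix.mulVec_diagonal]
    simp only [Pi.add_apply, Function.comp_apply, Matrix.mulVec, dotProduct,
      Fintype.sum_sum_type, hb, mul_zero, Finset.sum_const_zero, zero_add,
      Pi.zero_apply, Matrix.submatrix_apply] at h ⊢
    rw [hs i]
    by_cases hi : u (Sum.inr i) = 0
    · simp only [hi, ne_eq, not_true_eq_false, if_false] at h ⊢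
      linarith
    · have hk := key i hi
      simp only [hi, ne_eq, not_false_eq_true, if_true] at h ⊢
      linarith
end
end

section
/- Let σ : ℰ → (0,∞), q' : ℐ → ℝ with q'(x) ≠ 0 for all x ∈ ℐ, q'' : ℐ → ℝ, and ω₁ ∈ ℝ with ω₁ ≠ 0; set q(ω₁) := q' + iω₁q''. Let u₀⁽ʲ⁾ : 𝒱 → ℝ and u₁⁽ʲ⁾ : 𝒱 → ℂ, j = 1,…,N, satisfy (L_σ u₀⁽ʲ⁾)_ℐ + q' ⊙ (u₀⁽ʲ⁾)_ℐ = 0 and (L_σ u₁⁽ʲ⁾)_ℐ + q(ω₁) ⊙ (u₁⁽ʲ⁾)_ℐ = 0. Assume: (a) the hypotheses of the real Schrödinger local-uniqueness theorem hold for σ, q' and the u₀⁽ʲ⁾, namely ⋃_j supp (u₀⁽ʲ⁾)_ℐ = ℐ, (L_σ)_ℐℐ + diag(q') is invertible, and (L_σ)_ℐℐ + diag(s⁽ʲ⁾ ⊙ q') is invertible with s⁽ʲ⁾ = 1 − 2·1_{supp (u₀⁽ʲ⁾)_ℐ}; (b) (L_σ)_ℐℐ + diag(q(ω₁)) is invertible;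 (c) with B⁽ʲ⁾ := −i diag(conj((u₁⁽ʲ⁾)_ℐ)) ((L_σ)_ℐℐ + diag(q(ω₁)))⁻¹ diag((u₁⁽ʲ⁾)_ℐ), the real matrix Re([B⁽¹⁾; … ; B⁽ᴺ⁾]) (vertical concatenation of real parts) has trivial nullspace. Then the linearized two-frequency inverse complex Schrödinger problem from dissipated power is injective: if δq', δq'' : ℐ → ℝ, δu₀⁽ʲ⁾ : 𝒱 → ℝ, δu₁⁽ʲ⁾ : 𝒱 → ℂ satisfy, for all j, (δu₀⁽ʲ⁾)_ℬ = 0, (δu₁⁽ʲ⁾)_ℬ = 0, (L_σ δu₀⁽ʲ⁾)_ℐ + δq' ⊙ (u₀⁽ʲ⁾)_ℐ + q' ⊙ (δu₀⁽ʲ⁾)_ℐ = 0, δq' ⊙ |(u₀⁽ʲ⁾)_ℐ|² + 2q' ⊙ (δu₀⁽ʲ⁾)_ℐ ⊙ (u₀⁽ʲ⁾)_ℐ = 0, (L_σ δu₁⁽ʲ⁾)_ℐ + (δq' + iω₁δq'') ⊙ (u₁⁽ʲ⁾)_ℐ + q(ω₁) ⊙ (δu₁⁽ʲ⁾)_ℐ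 = 0, and δq' ⊙ |(u₁⁽ʲ⁾)_ℐ|² + q' ⊙ conj((u₁⁽ʲ⁾)_ℐ) ⊙ (δu₁⁽ʲ⁾)_ℐ + q' ⊙ (u₁⁽ʲ⁾)_ℐ ⊙ conj((δu₁⁽ʲ⁾)_ℐ) = 0, then δq' = 0, δq'' = 0, δu₀⁽ʲ⁾ = 0 and δu₁⁽ʲ⁾ = 0 for all j. -/
open Matrix

noncomputable section

variable {E B I : Type*} [Fintype E] [Fintype B] [Fintype I]
  [DecidableEq E] [DecidableEq B] [DecidableEq I]

theorem eq_zero_of_isUnit_mulVec {R J : Type*} [CommRing R] [Fintype J] [DecidableEq J]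
    {A : Matrix J J R} (hA : IsUnit A) {v : J → R} (h : A *ᵥ v = 0) : v = 0 := by
  have h1 := congrArg (fun w => A⁻¹ *ᵥ w) h
  simpa [Matrix.mulVec_mulVec,
    Matrix.nonsing_inv_mul _ ((Matrix.isUnit_iff_isUnit_det _).1 hA)] using h1

theorem dLap_restrict {R B I : Type*} [CommRing R] [Fintype B] [Fintype I]
    (L : Matrix (B ⊕ I) (B ⊕ I) R) (u : B ⊕ I → R) (hb : ∀ b, u (Sum.inl b) = 0) (i : I) :
    (L *ᵥ u) (Sum.inr i) =
      (L.submatrix Sum.inr Sum.inr *ᵥ (fun k => u (Sum.inr k))) i := by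
  simp [Matrix.mulVec, dotProduct, Fintype.sum_sum_type, hb]

/-- local uniqueness for the two-frequency inverse complex Schrödinger
problem from dissipated power measurements. -/
theorem complex_schroedinger_linearization_injective
    (head tail : E → B ⊕ I) (hloop : ∀ e, head e ≠ tail e)
    (σ : E → ℝ) (hσ : ∀ e, 0 < σ e)
    (q' : I → ℝ) (hq' : ∀ i, q' i ≠ 0) (q'' : I → ℝ) (ω₁ : ℝ) (hω₁ : ω₁ ≠ 0)
    (qc : I → ℂ) (hqc : qc = fun i => (q' i : ℂ) + (ω₁ : ℂ) * (q'' i : ℂ) * Complex.I)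
    (N : ℕ) (u₀ : Fin N → B ⊕ I → ℝ) (u₁ : Fin N → B ⊕ I → ℂ)
    (hu₀ : ∀ j, ((dLap ℝ head tail σ *ᵥ u₀ j) ∘ Sum.inr) +
      (fun i => q' i * u₀ j (Sum.inr i)) = 0)
    (hu₁ : ∀ j, ((dLap ℂ head tail (fun e => (σ e : ℂ)) *ᵥ u₁ j) ∘ Sum.inr) +
      (fun i => qc i * u₁ j (Sum.inr i)) = 0)
    -- (a) hypotheses of the real Schrödinger local-uniqueness theorem for σ, q', u₀
    (s : Fin N → I → ℝ)
    (hs : ∀ j i, s j i = 1 - 2 * (if u₀ j (Sum.inr i) ≠ 0 then 1 else 0))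
    (hcover : ∀ i : I, ∃ j, u₀ j (Sum.inr i) ≠ 0)
    (hinv : IsUnit ((dLap ℝ head tail σ).submatrix Sum.inr Sum.inr + Matrix.diagonal q'))
    (hinvs : ∀ j, IsUnit ((dLap ℝ head tail σ).submatrix Sum.inr Sum.inr +
      Matrix.diagonal (fun i => s j i * q' i)))
    -- (b) invertibility at the nonzero frequency
    (hinvc : IsUnit ((dLap ℂ head tail (fun e => (σ e : ℂ))).submatrix Sum.inr Sum.inr +
      Matrix.diagonal qc))
    -- (c) the real part of the stacked matrices B⁽ʲ⁾ has trivial nullspace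
    (Bmat : Fin N → Matrix I I ℂ)
    (hB : ∀ j, Bmat j = (-Complex.I) •
      (Matrix.diagonal (fun i => starRingEnd ℂ (u₁ j (Sum.inr i))) *
        ((dLap ℂ head tail (fun e => (σ e : ℂ))).submatrix Sum.inr Sum.inr +
          Matrix.diagonal qc)⁻¹ *
        Matrix.diagonal (fun i => u₁ j (Sum.inr i))))
    (hfullrank : ∀ x : I → ℝ,
      (∀ j, (Matrix.of fun i i' => (Bmat j i i').re) *ᵥ x = 0) → x = 0)
    -- the linearized equations
    (δq' δq'' : I → ℝ) (δu₀ : Fin N → B ⊕ I → ℝ) (δu₁ : Fin N → B ⊕ I → ℂ)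
    (h2a : ∀ j, δu₀ j ∘ Sum.inl = 0)
    (h2b : ∀ j, δu₁ j ∘ Sum.inl = 0)
    (h3 : ∀ j, ((dLap ℝ head tail σ *ᵥ δu₀ j) ∘ Sum.inr) +
      (fun i => δq' i * u₀ j (Sum.inr i)) + (fun i => q' i * δu₀ j (Sum.inr i)) = 0)
    (h4 : ∀ j i, δq' i * (u₀ j (Sum.inr i)) ^ 2 +
      2 * q' i * δu₀ j (Sum.inr i) * u₀ j (Sum.inr i) = 0)
    (h5 : ∀ j, ((dLap ℂ head tail (fun e => (σ e : ℂ)) *ᵥ δu₁ j) ∘ Sum.inr) +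
      (fun i => ((δq' i : ℂ) + (ω₁ : ℂ) * (δq'' i : ℂ) * Complex.I) * u₁ j (Sum.inr i)) +
      (fun i => qc i * δu₁ j (Sum.inr i)) = 0)
    (h6 : ∀ j i, (δq' i : ℂ) * ((‖u₁ j (Sum.inr i)‖ : ℝ) : ℂ) ^ 2 +
      (q' i : ℂ) * starRingEnd ℂ (u₁ j (Sum.inr i)) * δu₁ j (Sum.inr i) +
      (q' i : ℂ) * u₁ j (Sum.inr i) * starRingEnd ℂ (δu₁ j (Sum.inr i)) = 0) :
    δq' = 0 ∧ δq'' = 0 ∧ (∀ j, δu₀ j = 0) ∧ (∀ j, δu₁ j = 0) := by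
  have key0 : ∀ j, (fun i => δu₀ j (Sum.inr i)) = 0 := by
    intro j
    refine eq_zero_of_isUnit_mulVec (hinvs j) ?_
    ext i
    have h := congrFun (h3 j) i
    have h4' := h4 j i
    have hb : ∀ b, δu₀ j (Sum.inl b) = 0 := fun b => congrFun (h2a j) b
    have hl := dLap_restrict (dLap ℝ head tail σ) (δu₀ j) hb i
    simp only [Pi.add_apply, Function.comp_apply, Pi.zero_apply, hl] at h
    rw [Matrix.add_mulVec, Pi.add_apply, Matrix.mulVec_diagonal, hs, Pi.zero_apply]
    by_cases h0 : u₀ j (Sum.inr i) = 0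
    · simp only [h0, ne_eq, not_true_eq_false, if_false]
      rw [h0] at h
      linarith
    · simp only [h0, ne_eq, not_false_eq_true, if_true]
      have h7 : δq' i * u₀ j (Sum.inr i) + 2 * q' i * δu₀ j (Sum.inr i) = 0 := by
        apply mul_right_cancel₀ h0
        linarith
      linarith
  have hq : δq' = 0 := by
    ext i
    obtain ⟨j, hj⟩ := hcover i
    have h4' := h4 j i
    have h := congrFun (key0 j) i
    simp only [Pi.zero_apply] at h
    rw [h] at h4'
    simpa [hj] using h4'
  have key1 : ∀ j, ((dLap ℂ head tail (fun e => (σ e : ℂ))).submatrix Sum.inr Sum.inr +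
      Matrix.diagonal qc) *ᵥ (fun i => δu₁ j (Sum.inr i)) =
      Matrix.diagonal (fun i => u₁ j (Sum.inr i)) *ᵥ
        (fun i => -((ω₁ : ℂ) * (δq'' i : ℂ) * Complex.I)) := by
    intro j
    ext i
    have h := congrFun (h5 j) i
    have hb : ∀ b, δu₁ j (Sum.inl b) = 0 := fun b => congrFun (h2b j) b
    have hl := dLap_restrict (dLap ℂ head tail (fun e => (σ e : ℂ))) (δu₁ j) hb i
    simp only [Pi.add_apply, Function.comp_apply, Pi.zero_apply, hl, hq, Complex.ofReal_zero] at h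
    rw [Matrix.add_mulVec, Pi.add_apply, Matrix.mulVec_diagonal, Matrix.mulVec_diagonal]
    linear_combination h
  have hq2 : δq'' = 0 := by
    apply hfullrank
    intro j
    have hBx : ∀ i, (Bmat j *ᵥ (fun i => (δq'' i : ℂ))) i * ω₁ =
        starRingEnd ℂ (u₁ j (Sum.inr i)) * δu₁ j (Sum.inr i) := by
      intro i
      have hsol := congrArg (fun v =>
        ((dLap ℂ head tail (fun e => (σ e : ℂ))).submatrix Sum.inr Sum.inr +
          Matrix.diagonal qc)⁻¹ *ᵥ v) (key1 j)
      simp only [Matrix.mulVec_mulVec] at hsol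
      rw [Matrix.nonsing_inv_mul _ ((Matrix.isUnit_iff_isUnit_det _).1 hinvc),
        Matrix.one_mulVec] at hsol
      have hv : (fun i => -((ω₁ : ℂ) * (δq'' i : ℂ) * Complex.I)) =
          (-(ω₁ : ℂ) * Complex.I) • (fun i => (δq'' i : ℂ)) := by
        ext i
        simp only [Pi.smul_apply, smul_eq_mul]
        ring
      rw [hv, Matrix.mulVec_smul] at hsol
      have hsi := congrFun hsol i
      simp only [Pi.smul_apply, smul_eq_mul] at hsi
      rw [hsi, hB, Matrix.smul_mulVec, Pi.smul_apply, smul_eq_mul, Matrix.mul_assoc,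
        ← Matrix.mulVec_mulVec, Matrix.mulVec_diagonal]
      ring
    ext i
    have hre : ((Matrix.of fun i i' => (Bmat j i i').re) *ᵥ δq'') i =
        ((Bmat j *ᵥ (fun i => (δq'' i : ℂ))) i).re := by
      simp [Matrix.mulVec, dotProduct]
    rw [hre, Pi.zero_apply]
    have h := congrArg Complex.re (h6 j i)
    have hr := congrArg Complex.re (hBx i)
    simp only [hq, Pi.zero_apply, Complex.ofReal_zero, zero_mul, zero_add, Complex.add_re,
      Complex.mul_re, Complex.mul_im, Complex.conj_re, Complex.conj_im, Complex.ofReal_re,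
      Complex.ofReal_im, Complex.zero_re] at h hr
    have h8 : (2 * q' i * ω₁) * ((Bmat j *ᵥ (fun i => (δq'' i : ℂ))) i).re = 0 := by
      linear_combination h + 2 * q' i * hr
    have h9 : 2 * q' i * ω₁ ≠ 0 := by
      have := hq' i
      positivity
    exact (mul_eq_zero.1 h8).resolve_left h9
  refine ⟨hq, hq2, fun j => ?_, fun j => ?_⟩
  · ext v
    rcases v with b | i
    · exact congrFun (h2a j) b
    · exact congrFun (key0 j) i
  · have hz : (fun i => δu₁ j (Sum.inr i)) = 0 := by
      refine eq_zero_of_isUnit_mulVec hinvc ?_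
      rw [key1 j, hq2]
      ext i
      simp [Matrix.mulVec_diagonal]
    ext1 v
    rcases v with b | i
    · exact congrFun (h2b j) b
    · exact congrFun hz i
end
end

section
/- Let σ : ℰ → ℝ, q' : ℐ → ℝ with q'(x) ≠ 0 for all x ∈ ℐ, q'' : ℐ → ℝ, ω₁ ∈ ℝ with ω₁ ≠ 0, and q(ω₁) := q' + iω₁q''; suppose (L_σ)_ℐℐ + diag(q(ω₁)) is invertible. Let u₁ : 𝒱 → ℂ satisfy (L_σ u₁)_ℐ + q(ω₁) ⊙ (u₁)_ℐ = 0. Suppose δq'' : ℐ → ℝ and δu₁ : 𝒱 → ℂ satisfy (δu₁)_ℬ = 0 and (L_σ δu₁)_ℐ + iω₁δq'' ⊙ (u₁)_ℐ + q(ω₁) ⊙ (δu₁)_ℐ = 0. Then: (a) (δu₁)_ℐ = −iω₁ ((L_σ)_ℐℐ + diag(q(ω₁)))⁻¹ diag((u₁)_ℐ) δq''; and (b) if in addition q' ⊙ conj((u₁)_ℐ) ⊙ (δu₁)_ℐ + q' ⊙ (u₁)_ℐ ⊙ conj((δu₁)_ℐ) = 0, then Re(B) δq'' = 0, where B := −i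 diag(conj((u₁)_ℐ)) ((L_σ)_ℐℐ + diag(q(ω₁)))⁻¹ diag((u₁)_ℐ). -/
open Matrix

noncomputable section

variable {E B I : Type*} [Fintype E] [Fintype B] [Fintype I]
  [DecidableEq E] [DecidableEq B] [DecidableEq I]

/-- key identities in the proof of local uniqueness for the complex
Schrödinger problem: (a) the formula for `(δu₁)_ℐ` in terms of `δq''` and (b) the
equation `Re(B) δq'' = 0`. -/
theorem complex_schroedinger_linearization_identities
    (head tail : E → B ⊕ I) (hloop : ∀ e, head e ≠ tail e)
    (σ : E → ℝ)
    (q' : I → ℝ) (hq' : ∀ i, q' i ≠ 0) (q'' : I → ℝ) (ω₁ : ℝ) (hω₁ : ω₁ ≠ 0)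
    (qc : I → ℂ) (hqc : qc = fun i => (q' i : ℂ) + (ω₁ : ℂ) * (q'' i : ℂ) * Complex.I)
    (hinv : IsUnit ((dLap ℂ head tail (fun e => (σ e : ℂ))).submatrix Sum.inr Sum.inr +
      Matrix.diagonal qc))
    (u₁ : B ⊕ I → ℂ)
    (hu₁ : ((dLap ℂ head tail (fun e => (σ e : ℂ)) *ᵥ u₁) ∘ Sum.inr) +
      (fun i => qc i * u₁ (Sum.inr i)) = 0)
    (δq'' : I → ℝ) (δu₁ : B ⊕ I → ℂ)
    (hbd : δu₁ ∘ Sum.inl = 0)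
    (hlin : ((dLap ℂ head tail (fun e => (σ e : ℂ)) *ᵥ δu₁) ∘ Sum.inr) +
      (fun i => (ω₁ : ℂ) * (δq'' i : ℂ) * Complex.I * u₁ (Sum.inr i)) +
      (fun i => qc i * δu₁ (Sum.inr i)) = 0)
    (Bmat : Matrix I I ℂ)
    (hB : Bmat = (-Complex.I) •
      (Matrix.diagonal (fun i => starRingEnd ℂ (u₁ (Sum.inr i))) *
        ((dLap ℂ head tail (fun e => (σ e : ℂ))).submatrix Sum.inr Sum.inr +
          Matrix.diagonal qc)⁻¹ *
        Matrix.diagonal (fun i => u₁ (Sum.inr i)))) :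
    δu₁ ∘ Sum.inr = ((-Complex.I * (ω₁ : ℂ)) •
        (((dLap ℂ head tail (fun e => (σ e : ℂ))).submatrix Sum.inr Sum.inr +
            Matrix.diagonal qc)⁻¹ *
          Matrix.diagonal (fun i => u₁ (Sum.inr i)))) *ᵥ (fun i => (δq'' i : ℂ)) ∧
    ((∀ i, (q' i : ℂ) * starRingEnd ℂ (u₁ (Sum.inr i)) * δu₁ (Sum.inr i) +
        (q' i : ℂ) * u₁ (Sum.inr i) * starRingEnd ℂ (δu₁ (Sum.inr i)) = 0) →
      (Matrix.of fun i i' => (Bmat i i').re) *ᵥ δq'' = 0) := by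
  clear hu₁ hqc hloop
  generalize dLap ℂ head tail (fun e => (σ e : ℂ)) = L at *
  have hdet := (Matrix.isUnit_iff_isUnit_det _).mp hinv
  have hA : (L.submatrix Sum.inr Sum.inr + Matrix.diagonal qc) *ᵥ (δu₁ ∘ Sum.inr) =
      (-Complex.I * (ω₁ : ℂ)) •
        (Matrix.diagonal (fun i => u₁ (Sum.inr i)) *ᵥ (fun i => (δq'' i : ℂ))) := by
    funext i
    have h := congrFun hlin i
    have hb : ∀ b, δu₁ (Sum.inl b) = 0 := fun b => congrFun hbd b
    simp only [Pi.add_apply, Function.comp_apply, Matrix.mulVec, dotProduct,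
      Fintype.sum_sum_type, hb, mul_zero, Finset.sum_const_zero, zero_add, Pi.zero_apply] at h
    rw [Matrix.add_mulVec, Pi.add_apply, Matrix.mulVec_diagonal, Pi.smul_apply,
      Matrix.mulVec_diagonal]
    simp only [Matrix.mulVec, dotProduct, Matrix.submatrix_apply, Function.comp_apply,
      smul_eq_mul]
    linear_combination h
  generalize L.submatrix Sum.inr Sum.inr + Matrix.diagonal qc = A at *
  have ha : δu₁ ∘ Sum.inr = ((-Complex.I * (ω₁ : ℂ)) •
      (A⁻¹ * Matrix.diagonal (fun i => u₁ (Sum.inr i)))) *ᵥ (fun i => (δq'' i : ℂ)) := by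
    rw [Matrix.smul_mulVec, ← Matrix.mulVec_mulVec, ← Matrix.mulVec_smul, ← hA,
      Matrix.mulVec_mulVec, Matrix.nonsing_inv_mul _ hdet, Matrix.one_mulVec]
  refine ⟨ha, fun h => ?_⟩
  funext i
  have h1 : (ω₁ : ℂ) * (Bmat *ᵥ (fun i => (δq'' i : ℂ))) i =
      starRingEnd ℂ (u₁ (Sum.inr i)) * δu₁ (Sum.inr i) := by
    have h2 : δu₁ (Sum.inr i) = _ := congrFun ha i
    rw [h2, hB, Matrix.mul_assoc, Matrix.smul_mulVec, Matrix.smul_mulVec,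
      ← Matrix.mulVec_mulVec (M := Matrix.diagonal _), Pi.smul_apply, Pi.smul_apply,
      Matrix.mulVec_diagonal]
    simp only [smul_eq_mul]
    ring
  have h3 : ((Matrix.of fun i i' => (Bmat i i').re) *ᵥ δq'') i =
      ((Bmat *ᵥ (fun i => (δq'' i : ℂ))) i).re := by
    simp [Matrix.mulVec, dotProduct]
  have h4 := congrArg Complex.re h1
  have h5 := congrArg Complex.re (h i)
  rw [Complex.re_ofReal_mul] at h4
  rw [h3, Pi.zero_apply]
  have h6 : q' i * (ω₁ * ((Bmat *ᵥ (fun i => (δq'' i : ℂ))) i).re) = 0 := by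
    rw [h4]
    simp at h5
    rw [Complex.mul_re, Complex.conj_re, Complex.conj_im]
    linear_combination h5
  simpa [hq' i, hω₁] using h6
end
end
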